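/- arXiv:2308.14467 — 2 statements merged into one kernel-verified Lean document; each statement's English description precedes it below -/
import Mathlib

section
/- Let χ be a limit cardinal and let λ be a cardinal greater than or equal to χ. Then cov(λ, χ⁺, χ⁺, χ) = cov(λ, χ⁺, χ⁺, σ) for some cardinal σ < χ. -/
open Cardinal Set

universe u

/-- `X ⊆ 𝒫_{ρ₂}(ρ₁)` is a family witnessing the covering number `cov (ρ₁, ρ₂, ρ₃, ρ₄)`:
every `b ∈ 𝒫_{ρ₃}(ρ₁)` is covered by the union of fewer than `ρ₄` members of `X`. -/
def IsCovFamily (ρ₁ ρ₂ ρ₃ ρ₄ : Cardinal.{u}) (X : Set (Set ρ₁.out)) : Prop :=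
  (∀ x ∈ X, #x < ρ₂) ∧
    ∀ b : Set ρ₁.out, #b < ρ₃ →
      ∃ Q : Set (Set ρ₁.out), Q ⊆ X ∧ #Q < ρ₄ ∧ b ⊆ ⋃₀ Q

open scoped Classical in
/-- The covering number `cov (ρ₁, ρ₂, ρ₃, ρ₄)`: the least cardinality of a set
`X ⊆ 𝒫_{ρ₂}(ρ₁)` such that every `b ∈ 𝒫_{ρ₃}(ρ₁)` is included in the union of
fewer than `ρ₄` members of `X` (with value `2 ^ ρ₁` if no such family exists). -/
noncomputable def cov (ρ₁ ρ₂ ρ₃ ρ₄ : Cardinal.{u}) : Cardinal.{u} :=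
  if ∃ X, IsCovFamily ρ₁ ρ₂ ρ₃ ρ₄ X then
    sInf {κ | ∃ X, IsCovFamily ρ₁ ρ₂ ρ₃ ρ₄ X ∧ #X = κ}
  else 2 ^ ρ₁

/-- `χ` is a `λ`-revision cardinal: `cov (λ, χ, χ, σ) ≤ λ` for some cardinal `σ < χ`. -/
def IsRevision (χ lam : Cardinal.{u}) : Prop :=
  ∃ σ < χ, cov lam χ χ σ ≤ lam

/-- `c` is a limit cardinal: infinite and not the successor of any cardinal. -/
def IsLimitCard (c : Cardinal.{u}) : Prop :=
  ℵ₀ ≤ c ∧ ∀ μ : Cardinal.{u}, c ≠ Order.succ μ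

/-- `Z ⊆ 𝒫_τ(λ)` is a family witnessing `equal (λ, τ, ρ, σ)`: every `b ∈ [λ]^ρ` is
the union of fewer than `σ` members of `Z`. -/
def IsEqualFamily (lam tau rho sigma : Cardinal.{u}) (Z : Set (Set lam.out)) : Prop :=
  (∀ z ∈ Z, #z < tau) ∧
    ∀ b : Set lam.out, #b = rho →
      ∃ e : Set (Set lam.out), e ⊆ Z ∧ #e < sigma ∧ b = ⋃₀ e

open scoped Classical in
/-- `equal (λ, τ, ρ, σ)`: the least cardinality of a set `Z ⊆ 𝒫_τ(λ)` such that every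
`b ∈ [λ]^ρ` is the union of fewer than `σ` members of `Z`; `2 ^ λ` if no such `Z` exists. -/
noncomputable def equalCov (lam tau rho sigma : Cardinal.{u}) : Cardinal.{u} :=
  if ∃ Z, IsEqualFamily lam tau rho sigma Z then
    sInf {κ | ∃ Z, IsEqualFamily lam tau rho sigma Z ∧ #Z = κ}
  else 2 ^ lam

/-- `Z ⊆ 𝒫_τ(λ)` is a family witnessing `equal (λ, τ, <ρ, σ)`: every `b ∈ 𝒫_ρ(λ)` is
the union of fewer than `σ` members of `Z`. -/
def IsEqualLtFamily (lam tau rho sigma : Cardinal.{u}) (Z : Set (Set lam.out)) : Prop :=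
  (∀ z ∈ Z, #z < tau) ∧
    ∀ b : Set lam.out, #b < rho →
      ∃ e : Set (Set lam.out), e ⊆ Z ∧ #e < sigma ∧ b = ⋃₀ e

open scoped Classical in
/-- `equal (λ, τ, <ρ, σ)`: the least cardinality of a set `Z ⊆ 𝒫_τ(λ)` such that every
`b ∈ 𝒫_ρ(λ)` is the union of fewer than `σ` members of `Z`; `2 ^ λ` if no such `Z` exists. -/
noncomputable def equalLtCov (lam tau rho sigma : Cardinal.{u}) : Cardinal.{u} :=
  if ∃ Z, IsEqualLtFamily lam tau rho sigma Z then
    sInf {κ | ∃ Z, IsEqualLtFamily lam tau rho sigma Z ∧ #Z = κ}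
  else 2 ^ lam

/-!
A single family `X` witnessing `cov (λ, ρ₂, ρ₃, χ)` already witnesses `cov (λ, ρ₂, ρ₃, σ)` for some
`σ < χ`, provided `cf χ < cf ρ₃`. Otherwise choose `cf χ` many cardinals `σᵢ` cofinal in `χ`, and
for each of them a set `bᵢ` of size `< ρ₃` that is not covered by fewer than `σᵢ` members of `X`.
The union of the `bᵢ` still has size `< ρ₃`, so it is covered by some `Q ⊆ X` with `#Q < χ`. As `χ`
is a limit, `(#Q)⁺ ≤ σᵢ` for some `i`, and `Q` covers `bᵢ`, a contradiction. For `X` of least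
cardinality this is the nontrivial inequality between the two covering numbers. For `ρ₃ = χ⁺` the
condition on cofinalities holds because `χ⁺` is regular.
-/

theorem IsLimitCard.succ_lt {χ σ : Cardinal.{u}} (hχ : IsLimitCard χ) (hσ : σ < χ) :
    Order.succ σ < χ :=
  (Order.succ_le_of_lt hσ).lt_of_ne (hχ.2 σ).symm

theorem IsLimitCard.aleph0_le_cof_ord {χ : Cardinal.{u}} (hχ : IsLimitCard χ) :
    ℵ₀ ≤ χ.ord.cof :=
  Ordinal.aleph0_le_cof_iff.2 (Ordinal.one_lt_cof_iff.2 (isSuccLimit_ord hχ.1))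

theorem mk_iUnion_lt_of_lt_cof_ord {ι α : Type u} {s : ι → Set α} {c : Cardinal.{u}}
    (hc : ℵ₀ ≤ c) (hι : #ι < c.ord.cof) (hs : ∀ i, #(s i) < c) : #(⋃ i, s i : Set α) < c :=
  (mk_iUnion_le s).trans_lt <|
    mul_lt_of_lt hc (hι.trans_le (Ordinal.cof_ord_le c)) (iSup_lt_of_lt_cof_ord hι hs)

theorem exists_cofinal_family_mk_eq_cof_ord (c : Cardinal.{u}) :
    ∃ (ι : Type u) (f : ι → Cardinal.{u}),
      #ι = c.ord.cof ∧ (∀ i, f i < c) ∧ ∀ σ < c, ∃ i, σ ≤ f i := by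
  obtain ⟨s, hs, hs_card⟩ := Order.exists_cof_eq c.ord.ToType
  -- Indexing by a subset of `c.ord.ToType` rather than of `Iio c` keeps `ι` in `Type u`.
  refine ⟨s, fun i => (Ordinal.ToType.mk.symm i.1).1.card, ?_, fun i => ?_, fun σ hσ => ?_⟩
  · rw [hs_card, Ordinal.cof_toType]
  · exact lt_ord.1 (Ordinal.ToType.mk.symm i.1).2
  · obtain ⟨i, hi, hσi⟩ := hs (Ordinal.ToType.mk ⟨σ.ord, ord_lt_ord.2 hσ⟩)
    have hord : σ.ord ≤ (Ordinal.ToType.mk.symm i).1 :=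
      (OrderIso.le_symm_apply Ordinal.ToType.mk).2 hσi
    exact ⟨⟨i, hi⟩, ord_le.1 hord⟩

section CovFamily

variable {ρ₁ ρ₂ ρ₃ ρ₄ : Cardinal.{u}} {X : Set (Set ρ₁.out)}

theorem IsCovFamily.mono {σ τ : Cardinal.{u}} (hστ : σ ≤ τ) (hX : IsCovFamily ρ₁ ρ₂ ρ₃ σ X) :
    IsCovFamily ρ₁ ρ₂ ρ₃ τ X := by
  refine ⟨hX.1, fun b hb => ?_⟩
  obtain ⟨Q, hQX, hQ, hbQ⟩ := hX.2 b hb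
  exact ⟨Q, hQX, hQ.trans_le hστ, hbQ⟩

theorem isCovFamily_setOf_mk_lt (h₃₂ : ρ₃ ≤ ρ₂) (h₄ : 1 < ρ₄) :
    IsCovFamily ρ₁ ρ₂ ρ₃ ρ₄ {x | #x < ρ₂} :=
  ⟨fun _ hx => hx, fun b hb =>
    ⟨{b}, singleton_subset_iff.2 (hb.trans_le h₃₂), by rwa [mk_singleton],
      (sUnion_singleton b).superset⟩⟩

theorem IsCovFamily.cov_le_mk (hX : IsCovFamily ρ₁ ρ₂ ρ₃ ρ₄ X) : cov ρ₁ ρ₂ ρ₃ ρ₄ ≤ #X := by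
  rw [cov, if_pos ⟨X, hX⟩]
  exact csInf_le' ⟨X, hX, rfl⟩

theorem exists_isCovFamily_mk_eq_cov (hex : ∃ X, IsCovFamily ρ₁ ρ₂ ρ₃ ρ₄ X) :
    ∃ X, IsCovFamily ρ₁ ρ₂ ρ₃ ρ₄ X ∧ #X = cov ρ₁ ρ₂ ρ₃ ρ₄ := by
  have hne : {κ | ∃ X, IsCovFamily ρ₁ ρ₂ ρ₃ ρ₄ X ∧ #X = κ}.Nonempty :=
    hex.elim fun X hX => ⟨#X, X, hX, rfl⟩
  rw [cov, if_pos hex]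
  exact csInf_mem hne

theorem cov_le_cov_of_le {σ τ : Cardinal.{u}} (hστ : σ ≤ τ)
    (hex : ∃ X, IsCovFamily ρ₁ ρ₂ ρ₃ σ X) : cov ρ₁ ρ₂ ρ₃ τ ≤ cov ρ₁ ρ₂ ρ₃ σ := by
  obtain ⟨X, hX, hX_card⟩ := exists_isCovFamily_mk_eq_cov hex
  exact hX_card ▸ (hX.mono hστ).cov_le_mk

theorem IsCovFamily.exists_lt {χ : Cardinal.{u}} (hχ : IsLimitCard χ)
    (hcof : χ.ord.cof < ρ₃.ord.cof) (hX : IsCovFamily ρ₁ ρ₂ ρ₃ χ X) :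
    ∃ σ < χ, IsCovFamily ρ₁ ρ₂ ρ₃ σ X := by
  by_contra! hnot
  obtain ⟨ι, f, hι, hfχ, hf_cofinal⟩ := exists_cofinal_family_mk_eq_cof_ord χ
  have hbad (i : ι) : ∃ b : Set ρ₁.out, #b < ρ₃ ∧ ∀ Q ⊆ X, #Q < f i → ¬ b ⊆ ⋃₀ Q := by
    by_contra! hcov
    exact hnot (f i) (hfχ i) ⟨hX.1, hcov⟩
  choose b hb_card hb_not_subset using hbad
  have hρ₃ : ℵ₀ ≤ ρ₃ := (hχ.aleph0_le_cof_ord.trans hcof.le).trans (Ordinal.cof_ord_le ρ₃)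
  obtain ⟨Q, hQX, hQχ, hbQ⟩ :=
    hX.2 (⋃ i, b i) (mk_iUnion_lt_of_lt_cof_ord hρ₃ (hι.trans_lt hcof) hb_card)
  obtain ⟨i, hi⟩ := hf_cofinal _ (hχ.succ_lt hQχ)
  exact hb_not_subset i Q hQX (Order.succ_le_iff.1 hi) ((subset_iUnion b i).trans hbQ)

end CovFamily

theorem stmt6_general {χ lam ρ₂ ρ₃ : Cardinal.{u}} (hχ : IsLimitCard χ)
    (hcof : χ.ord.cof < ρ₃.ord.cof) (hex : ∃ X, IsCovFamily lam ρ₂ ρ₃ χ X) :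
    ∃ σ < χ, cov lam ρ₂ ρ₃ χ = cov lam ρ₂ ρ₃ σ := by
  obtain ⟨X, hX, hX_card⟩ := exists_isCovFamily_mk_eq_cov hex
  obtain ⟨σ, hσχ, hXσ⟩ := hX.exists_lt hχ hcof
  exact ⟨σ, hσχ, (cov_le_cov_of_le hσχ.le ⟨X, hXσ⟩).antisymm (hX_card ▸ hXσ.cov_le_mk)⟩

theorem IsLimitCard.cof_ord_lt_cof_ord_succ {χ : Cardinal.{u}} (hχ : IsLimitCard χ) :
    χ.ord.cof < (Order.succ χ).ord.cof := by
  rw [(isRegular_succ hχ.1).cof_ord]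
  exact Order.lt_succ_of_le (Ordinal.cof_ord_le χ)

/-- Let `χ` be a limit cardinal and `λ ≥ χ` a cardinal. Then
`cov (λ, χ⁺, χ⁺, χ) = cov (λ, χ⁺, χ⁺, σ)` for some cardinal `σ < χ`. -/
theorem stmt6 (χ lam : Cardinal.{u}) (hχ : IsLimitCard χ) (hχlam : χ ≤ lam) :
    ∃ σ < χ, cov lam (Order.succ χ) (Order.succ χ) χ
      = cov lam (Order.succ χ) (Order.succ χ) σ :=
  stmt6_general hχ hχ.cof_ord_lt_cof_ord_succ
    ⟨_, isCovFamily_setOf_mk_lt le_rfl (one_lt_aleph0.trans_le hχ.1)⟩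
end

section
/- Let σ ≤ ρ < λ be three infinite cardinals. Then cov(λ, ρ⁺, ρ⁺, σ) ≤ equal(λ, ρ⁺, ρ, σ) ≤ max{2^ρ, cov(λ, ρ⁺, ρ⁺, σ)}. -/
/-!
A set of size at most `ρ ≤ λ` extends to a subset of `λ` of size exactly `ρ`, so a family witnessing
`equal` also witnesses `cov`. Conversely, if `X` witnesses `cov`, then the family of all subsets of
members of `X` witnesses `equal`: whenever `b ⊆ ⋃ Q`, the set `b` is the union of the traces
`b ∩ x`, `x ∈ Q`. Closing `X ⊆ 𝒫_τ(λ)` under subsets multiplies its size by at most `2 ^< τ`.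
-/

open Cardinal Set

universe u

section Cardinal

variable {α : Type u} {κ τ : Cardinal.{u}}

theorem exists_superset_mk_eq {s : Set α} (hs : #s ≤ κ) (hκ : κ ≤ #α) :
    ∃ t, s ⊆ t ∧ #t = κ := by
  obtain ⟨c, rfl⟩ := le_mk_iff_exists_set.mp hκ
  rcases c.finite_or_infinite with hc | hc
  · have hsc : s.encard ≤ c.encard := OrderHomClass.mono toENat hs
    obtain ⟨t, hst, -, htc⟩ :=
      exists_superset_subset_encard_eq (subset_univ s) hsc (encard_le_encard (subset_univ c))
    have ht : t.Finite := finite_of_encard_eq_coe (htc.trans hc.encard_eq_coe)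
    exact ⟨t, hst, toENat_injOn ht.lt_aleph0.le hc.lt_aleph0.le htc⟩
  · refine ⟨s ∪ c, subset_union_left, le_antisymm ?_ (mk_le_mk_of_subset subset_union_right)⟩
    calc #(s ∪ c : Set α) ≤ #s + #c := mk_union_le s c
      _ = #c := Cardinal.add_eq_right (aleph0_le_mk_iff.mpr hc.to_subtype) hs

theorem le_two_powerlt (κ : Cardinal.{u}) : κ ≤ 2 ^< κ :=
  le_of_forall_lt fun μ hμ => (cantor μ).trans_le (le_powerlt 2 hμ)

theorem mk_lowerClosure_le {X : Set (Set α)} (hX : ∀ x ∈ X, #x < τ) :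
    #(lowerClosure X : Set (Set α)) ≤ #X * 2 ^< τ := by
  have mk_powerset_le (x : X) : #(𝒫 (x : Set α)) ≤ 2 ^< τ := by
    rw [mk_powerset]
    exact le_powerlt 2 (hX x x.2)
  calc #(lowerClosure X : Set (Set α)) = #(⋃ x ∈ X, 𝒫 x) := by rw [coe_lowerClosure]; rfl
    _ ≤ #X * ⨆ x : X, #(𝒫 (x : Set α)) := mk_biUnion_le _ X
    _ ≤ #X * 2 ^< τ := by gcongr; exact ciSup_le' mk_powerset_le

end Cardinal

section Covering

variable {lam τ ρ ρ' σ : Cardinal.{u}} {X Z : Set (Set lam.out)}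

theorem IsCovFamily.cov_le_mk_s15 (hX : IsCovFamily lam τ ρ σ X) : cov lam τ ρ σ ≤ #X := by
  rw [cov, if_pos ⟨X, hX⟩]
  exact csInf_le' ⟨X, hX, rfl⟩

theorem IsCovFamily.exists_mk_eq_cov (hX : IsCovFamily lam τ ρ σ X) :
    ∃ Y, IsCovFamily lam τ ρ σ Y ∧ #Y = cov lam τ ρ σ := by
  rw [cov, if_pos ⟨X, hX⟩]
  exact csInf_mem (s := {κ | ∃ Y, IsCovFamily lam τ ρ σ Y ∧ #Y = κ}) ⟨_, X, hX, rfl⟩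

theorem IsEqualFamily.equalCov_le_mk (hZ : IsEqualFamily lam τ ρ σ Z) :
    equalCov lam τ ρ σ ≤ #Z := by
  rw [equalCov, if_pos ⟨Z, hZ⟩]
  exact csInf_le' ⟨Z, hZ, rfl⟩

theorem IsEqualFamily.exists_mk_eq_equalCov (hZ : IsEqualFamily lam τ ρ σ Z) :
    ∃ Y, IsEqualFamily lam τ ρ σ Y ∧ #Y = equalCov lam τ ρ σ := by
  rw [equalCov, if_pos ⟨Z, hZ⟩]
  exact csInf_mem (s := {κ | ∃ Y, IsEqualFamily lam τ ρ σ Y ∧ #Y = κ}) ⟨_, Z, hZ, rfl⟩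

theorem isEqualFamily_setOf_mk_lt (lam : Cardinal.{u}) (hσ : 1 < σ) (hρτ : ρ < τ) :
    IsEqualFamily lam τ ρ σ {z | #z < τ} := by
  refine ⟨fun _ hz => hz, fun b hb => ⟨{b}, ?_, ?_, (sUnion_singleton b).symm⟩⟩
  · exact singleton_subset_iff.mpr (hb.trans_lt hρτ)
  · rwa [mk_singleton]

theorem IsEqualFamily.isCovFamily (hZ : IsEqualFamily lam τ ρ σ Z) (hρlam : ρ ≤ lam) :
    IsCovFamily lam τ (Order.succ ρ) σ Z := by
  refine ⟨hZ.1, fun b hb => ?_⟩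
  obtain ⟨c, hbc, hc⟩ :=
    exists_superset_mk_eq (Order.lt_succ_iff.mp hb) (hρlam.trans_eq lam.mk_out.symm)
  obtain ⟨e, heZ, he, rfl⟩ := hZ.2 c hc
  exact ⟨e, heZ, he, hbc⟩

theorem IsCovFamily.isEqualFamily_lowerClosure (hX : IsCovFamily lam τ ρ' σ X) (hρ : ρ < ρ') :
    IsEqualFamily lam τ ρ σ (lowerClosure X) := by
  refine ⟨fun z ⟨x, hx, hzx⟩ => (mk_le_mk_of_subset hzx).trans_lt (hX.1 x hx), fun b hb => ?_⟩
  obtain ⟨Q, hQX, hQ, hbQ⟩ := hX.2 b (hb.trans_lt hρ)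
  refine ⟨(b ∩ ·) '' Q, ?_, mk_image_le.trans_lt hQ, ?_⟩
  · rintro _ ⟨x, hx, rfl⟩
    exact ⟨x, hQX hx, inter_subset_right⟩
  · rw [sUnion_image, ← inter_iUnion₂, ← sUnion_eq_biUnion, inter_eq_left.mpr hbQ]

theorem IsEqualFamily.cov_le_equalCov (hZ : IsEqualFamily lam τ ρ σ Z) (hρlam : ρ ≤ lam) :
    cov lam τ (Order.succ ρ) σ ≤ equalCov lam τ ρ σ := by
  obtain ⟨Y, hY, hYcard⟩ := hZ.exists_mk_eq_equalCov
  exact hYcard ▸ (hY.isCovFamily hρlam).cov_le_mk_s15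

theorem IsCovFamily.equalCov_le_cov_mul_two_powerlt (hX : IsCovFamily lam τ ρ' σ X)
    (hρ : ρ < ρ') : equalCov lam τ ρ σ ≤ cov lam τ ρ' σ * 2 ^< τ := by
  obtain ⟨Y, hY, hYcard⟩ := hX.exists_mk_eq_cov
  calc equalCov lam τ ρ σ ≤ #(lowerClosure Y : Set (Set lam.out)) :=
        (hY.isEqualFamily_lowerClosure hρ).equalCov_le_mk
    _ ≤ #Y * 2 ^< τ := mk_lowerClosure_le hY.1
    _ = cov lam τ ρ' σ * 2 ^< τ := by rw [hYcard]

end Covering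

theorem stmt15_general (σ ρ τ lam : Cardinal.{u}) (hσ : 1 < σ) (hρlam : ρ ≤ lam) (hρτ : ρ < τ)
    (hτ : ℵ₀ ≤ τ) :
    cov lam τ (Order.succ ρ) σ ≤ equalCov lam τ ρ σ ∧
      equalCov lam τ ρ σ ≤ max (2 ^< τ) (cov lam τ (Order.succ ρ) σ) := by
  have hZ := isEqualFamily_setOf_mk_lt lam hσ hρτ
  refine ⟨hZ.cov_le_equalCov hρlam, ?_⟩
  calc equalCov lam τ ρ σ ≤ cov lam τ (Order.succ ρ) σ * 2 ^< τ :=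
        (hZ.isCovFamily hρlam).equalCov_le_cov_mul_two_powerlt (Order.lt_succ ρ)
    _ ≤ max (cov lam τ (Order.succ ρ) σ) (2 ^< τ) :=
        mul_le_max_of_aleph0_le_right (hτ.trans (le_two_powerlt τ))
    _ = max (2 ^< τ) (cov lam τ (Order.succ ρ) σ) := max_comm _ _

/-- Let `σ ≤ ρ < λ` be three infinite cardinals. Then
`cov (λ, ρ⁺, ρ⁺, σ) ≤ equal (λ, ρ⁺, ρ, σ) ≤ max (2^ρ) (cov (λ, ρ⁺, ρ⁺, σ))`. -/
theorem stmt15 (σ ρ lam : Cardinal.{u}) (hσ : ℵ₀ ≤ σ) (hσρ : σ ≤ ρ) (hρlam : ρ < lam) :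
    cov lam (Order.succ ρ) (Order.succ ρ) σ ≤ equalCov lam (Order.succ ρ) ρ σ ∧
      equalCov lam (Order.succ ρ) ρ σ
        ≤ max (2 ^ ρ) (cov lam (Order.succ ρ) (Order.succ ρ) σ) := by
  simpa only [powerlt_succ two_ne_zero] using stmt15_general σ ρ (Order.succ ρ) lam
    (one_lt_aleph0.trans_le hσ) hρlam.le (Order.lt_succ ρ) ((hσ.trans hσρ).trans (Order.le_succ ρ))
end
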